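/- arXiv:2206.14345 — 2 statements merged into one kernel-verified Lean document; each statement's English description precedes it below -/
import Mathlib

section
/- Let K = ℚ(θ) where θ is a root of the irreducible polynomial F(x) = x^7 + a x^5 + b with a ≡ 7 (mod 8), b ≡ 0 (mod 8). Then 2 is a common index divisor of K, so K is not monogenic. -/
open NumberField Polynomial

/-!
If `𝓞 K` has three distinct ring homomorphisms to `𝔽₂`, two of them agree at any given `η`, hence on
`ℤ[η]`; if the index of `ℤ[η]` were odd they would agree on all of `𝓞 K`. So it suffices to find
three primes of residue degree one above `2`.

Modulo `2` the polynomial `F` is `x⁵ (x + 1)²`. Hensel's lemma at `1` and `-1` (where `8 ∣ F` and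
`F'` is exactly divisible by `2`) gives two roots in `ℤ₂` that differ modulo `4`, hence two distinct
homomorphisms `𝓞 K → ℤ₂`, and these stay distinct modulo `2`. The third prime contains `θ` and is
read off the Newton polygon: write `b = 2ᵏ c` with `c` odd. If `5 ∤ k`, comparing valuations in
`θ⁵ (θ² + a) = -2ᵏ c` shows that a prime above `2` containing `θ` has ramification index at least
`5`, which leaves no room in degree `7` for a residue degree above `1`. If `5 ∣ k`, then `F` has a
root in `ℤ₂` of valuation `k / 5`.
-/

theorem prime_dvd_index_adjoin_singleton_of_lt_card {R ι : Type*} [CommRing R] [Fintype ι] {p : ℕ}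
    [Fact p.Prime] {φ : ι → R →+* ZMod p} (hφ : Function.Injective φ)
    (hcard : p < Fintype.card ι) (η : R) :
    p ∣ (Algebra.adjoin ℤ {η}).toSubring.toAddSubgroup.index := by
  obtain ⟨i, j, hij, heq⟩ :=
    Fintype.exists_ne_map_eq_of_card_lt (fun i ↦ φ i η) (by rwa [ZMod.card])
  set n := (Algebra.adjoin ℤ {η}).toSubring.toAddSubgroup.index
  have agree_on_adjoin : Algebra.adjoin ℤ {η} ≤
      AlgHom.equalizer (φ i).toIntAlgHom (φ j).toIntAlgHom :=
    AlgHom.adjoin_le_equalizer _ _ (by simpa using heq)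
  have agree_on_multiples (x : R) : (n : ZMod p) * φ i x = n * φ j x := by
    simpa using agree_on_adjoin
      ((Algebra.adjoin ℤ {η}).toSubring.toAddSubgroup.nsmul_index_mem x)
  rw [← ZMod.natCast_eq_zero_iff]
  by_contra hn
  exact hij (hφ (RingHom.ext fun x ↦ mul_left_cancel₀ hn (agree_on_multiples x)))

section MinpolyInt

variable {K : Type*} [Field K] [NumberField K] {θ : 𝓞 K}

theorem minpoly_rat_eq_map_minpoly_int (θ : 𝓞 K) :
    minpoly ℚ (θ : K) = (minpoly ℤ θ).map (algebraMap ℤ ℚ) := by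
  rw [minpoly.isIntegrallyClosed_eq_field_fractions' ℚ (RingOfIntegers.isIntegral_coe θ),
    RingOfIntegers.minpoly_coe]

theorem finrank_int_eq_natDegree_minpoly (hgen : Algebra.adjoin ℚ {(θ : K)} = ⊤) :
    Module.finrank ℤ (𝓞 K) = (minpoly ℤ θ).natDegree := by
  have hint : IsIntegral ℚ (θ : K) := Algebra.IsIntegral.isIntegral _
  rw [RingOfIntegers.rank, (PowerBasis.ofAdjoinEqTop hint hgen).finrank,
    ← PowerBasis.natDegree_minpoly, PowerBasis.ofAdjoinEqTop_gen, minpoly_rat_eq_map_minpoly_int,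
    natDegree_map_eq_of_injective (algebraMap ℤ ℚ).injective_int]

theorem norm_eq_coeff_zero_minpoly (hgen : Algebra.adjoin ℚ {(θ : K)} = ⊤) :
    Algebra.norm ℤ θ = (-1) ^ (minpoly ℤ θ).natDegree * (minpoly ℤ θ).coeff 0 := by
  have hint : IsIntegral ℚ (θ : K) := Algebra.IsIntegral.isIntegral _
  have norm_rat := Algebra.PowerBasis.norm_gen_eq_coeff_zero_minpoly
    (PowerBasis.ofAdjoinEqTop hint hgen)
  rw [← PowerBasis.natDegree_minpoly, PowerBasis.ofAdjoinEqTop_gen, minpoly_rat_eq_map_minpoly_int,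
    natDegree_map_eq_of_injective (algebraMap ℤ ℚ).injective_int, coeff_map, eq_intCast,
    ← Algebra.coe_norm_int] at norm_rat
  exact_mod_cast norm_rat

theorem exists_isMaximal_mem_of_dvd_coeff_zero_minpoly {p : ℕ} (hp : p.Prime)
    (hgen : Algebra.adjoin ℚ {(θ : K)} = ⊤) (hdvd : (p : ℤ) ∣ (minpoly ℤ θ).coeff 0) :
    ∃ P : Ideal (𝓞 K), P.IsMaximal ∧ (∀ n : ℤ, (n : 𝓞 K) ∈ P ↔ (p : ℤ) ∣ n) ∧ θ ∈ P := by
  have hnorm : (p : ℤ) ∣ (Ideal.absNorm (Ideal.span {θ}) : ℤ) := by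
    rw [Ideal.absNorm_span_singleton, Int.dvd_natAbs, norm_eq_coeff_zero_minpoly hgen]
    exact hdvd.mul_left _
  obtain ⟨P, hmax, hunder, hdvd⟩ :=
    Ideal.exists_isMaximal_dvd_of_dvd_absNorm (Nat.prime_iff_prime_int.1 hp) _ hnorm
  refine ⟨P, hmax, fun n ↦ ?_, Ideal.dvd_span_singleton.1 hdvd⟩
  rw [← Ideal.mem_span_singleton, ← hunder, Ideal.under_def, Ideal.mem_comap, eq_intCast]

end MinpolyInt

section PadicHoms

variable {p : ℕ} [Fact p.Prime]

theorem toZMod_eq_zero_iff_dvd {x : ℤ_[p]} : PadicInt.toZMod x = 0 ↔ (p : ℤ_[p]) ∣ x := by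
  rw [← RingHom.mem_ker, PadicInt.ker_toZMod, PadicInt.maximalIdeal_eq_span_p,
    Ideal.mem_span_singleton]

theorem isUnit_of_toZMod_ne_zero {x : ℤ_[p]} (hx : PadicInt.toZMod x ≠ 0) : IsUnit x := by
  rwa [← IsLocalRing.notMem_maximalIdeal, ← PadicInt.ker_toZMod, RingHom.mem_ker]

theorem eq_of_forall_pow_dvd_sub {x y : ℤ_[p]} (h : ∀ n : ℕ, (p : ℤ_[p]) ^ n ∣ x - y) :
    x = y := by
  refine PadicInt.ext_of_toZModPow.1 fun n ↦ ?_
  rw [← sub_eq_zero, ← map_sub, ← RingHom.mem_ker, PadicInt.ker_toZModPow,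
    Ideal.mem_span_singleton]
  exact h n

section Dedekind

variable {R : Type*} [CommRing R] [IsDedekindDomain R]

/-- The prime `P` of those `x` with `φ x ∈ (p)` is unramified over `p`, since `φ` maps `P ^ 2` into
`(p ^ 2)`. So `(p) = P * J` with `J` not contained in `P`, and `s` is chosen in `J`. -/
theorem exists_toZMod_ne_zero_and_dvd_mul (φ : R →+* ℤ_[p]) :
    ∃ s : R, PadicInt.toZMod (φ s) ≠ 0 ∧ ∀ x, PadicInt.toZMod (φ x) = 0 → (p : R) ∣ s * x := by
  let P : Ideal R := (Ideal.span {(p : ℤ_[p])}).comap φ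
  have mem_P (x : R) : x ∈ P ↔ PadicInt.toZMod (φ x) = 0 := by
    rw [toZMod_eq_zero_iff_dvd, ← Ideal.mem_span_singleton, Ideal.mem_comap]
  obtain ⟨J, hJ⟩ : P ∣ Ideal.span {(p : R)} := by
    rw [Ideal.dvd_span_singleton, mem_P]
    simp
  have J_not_le : ¬ J ≤ P := fun hle ↦ by
    have p_mem : (p : R) ∈ P ^ 2 := by
      rw [sq]
      exact Ideal.mul_mono_right hle (hJ ▸ Ideal.mem_span_singleton_self _)
    have p_sq_dvd : (p : ℤ_[p]) ^ 2 ∣ p := by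
      have := Ideal.le_comap_pow φ 2 p_mem
      rwa [Ideal.mem_comap, map_natCast, Ideal.span_singleton_pow,
        Ideal.mem_span_singleton] at this
    exact PadicInt.prime_p.not_isUnit (PadicInt.prime_p.squarefree _ (sq (p : ℤ_[p]) ▸ p_sq_dvd))
  obtain ⟨s, hsJ, hsP⟩ := SetLike.not_le_iff_exists.1 J_not_le
  refine ⟨s, (mem_P s).not.1 hsP, fun x hx ↦ ?_⟩
  rw [← Ideal.mem_span_singleton, hJ, mul_comm s]
  exact Ideal.mul_mem_mul ((mem_P x).2 hx) hsJ

/-- Writing `s * (x - m) = p * y` with `m` an integer and `φ s` a unit turns a congruence modulo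
`p ^ n` at `y` into one modulo `p ^ (n + 1)` at `x`. -/
theorem ringHom_padicInt_ext_of_toZMod {φ ψ : R →+* ℤ_[p]}
    (h : PadicInt.toZMod.comp φ = PadicInt.toZMod.comp ψ) : φ = ψ := by
  have hmod (x : R) : PadicInt.toZMod (φ x) = PadicInt.toZMod (ψ x) := RingHom.congr_fun h x
  obtain ⟨s, hs, hdvd⟩ := exists_toZMod_ne_zero_and_dvd_mul φ
  suffices hpow : ∀ (n : ℕ) (x : R), (p : ℤ_[p]) ^ n ∣ φ x - ψ x from
    RingHom.ext fun x ↦ eq_of_forall_pow_dvd_sub fun n ↦ hpow n x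
  intro n
  induction n with
  | zero => simp
  | succ n ih =>
    intro x
    set m := (φ x).zmodRepr
    have hφm : PadicInt.toZMod (φ (x - m)) = 0 := by
      rw [map_sub, map_natCast, ← RingHom.mem_ker, PadicInt.ker_toZMod]
      exact PadicInt.sub_zmodRepr_mem _
    obtain ⟨y, hy⟩ := hdvd _ hφm
    have hφy : φ s * φ (x - m) = p * φ y := by rw [← map_mul, hy, map_mul, map_natCast]
    have hψy : ψ s * ψ (x - m) = p * ψ y := by rw [← map_mul, hy, map_mul, map_natCast]
    have hψm : (p : ℤ_[p]) ∣ ψ (x - m) := by rwa [← toZMod_eq_zero_iff_dvd, ← hmod]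
    have key : φ s * (φ x - ψ x) = p * (φ y - ψ y) - (φ s - ψ s) * ψ (x - m) := by
      simp only [map_sub, map_natCast] at hφy hψy ⊢
      linear_combination hφy - hψy
    rw [← (isUnit_of_toZMod_ne_zero hs).dvd_mul_left, key]
    exact dvd_sub (pow_succ' (p : ℤ_[p]) n ▸ mul_dvd_mul_left _ (ih y))
      (pow_succ (p : ℤ_[p]) n ▸ mul_dvd_mul (ih s) hψm)

end Dedekind

theorem exists_ringHom_padicInt_of_aeval_minpoly_eq_zero {K : Type*} [Field K] [NumberField K]
    {θ : 𝓞 K} (hgen : Algebra.adjoin ℚ {(θ : K)} = ⊤) {r : ℤ_[p]}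
    (hr : aeval r (minpoly ℤ θ) = 0) : ∃ φ : 𝓞 K →+* ℤ_[p], φ θ = r := by
  have hint : IsIntegral ℚ (θ : K) := Algebra.IsIntegral.isIntegral _
  have hroot : aeval (r : ℚ_[p]) (minpoly ℚ (PowerBasis.ofAdjoinEqTop hint hgen).gen) = 0 := by
    rw [PowerBasis.ofAdjoinEqTop_gen, minpoly_rat_eq_map_minpoly_int, aeval_map_algebraMap,
      ← PadicInt.algebraMap_apply, aeval_algebraMap_apply, hr, map_zero]
  let f : K →ₐ[ℚ] ℚ_[p] := (PowerBasis.ofAdjoinEqTop hint hgen).lift r hroot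
  have hf : f θ = r := by
    simpa only [PowerBasis.ofAdjoinEqTop_gen] using
      (PowerBasis.ofAdjoinEqTop hint hgen).lift_gen _ hroot
  have f_mem_padicInt (x : 𝓞 K) : f x ∈ PadicInt.subring p := by
    have hfx : IsIntegral ℤ (f x) := (RingOfIntegers.isIntegral_coe x).map (f.restrictScalars ℤ)
    obtain ⟨y, hy⟩ := IsIntegrallyClosed.isIntegral_iff.1 (hfx.tower_top (A := ℤ_[p]))
    exact hy ▸ y.2
  exact ⟨(f.toRingHom.comp (algebraMap (𝓞 K) K)).codRestrict (PadicInt.subring p) f_mem_padicInt,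
    Subtype.ext hf⟩

theorem exists_padicInt_aeval_eq_zero_of_pow_dvd {F : ℤ[X]} {s : ℤ} {j : ℕ}
    (hF : (p : ℤ) ^ (2 * j + 1) ∣ F.eval s) (hdvd : (p : ℤ) ^ j ∣ F.derivative.eval s)
    (hndvd : ¬ (p : ℤ) ^ (j + 1) ∣ F.derivative.eval s) :
    ∃ z : ℤ_[p], aeval z F = 0 ∧ (p : ℤ_[p]) ^ (j + 1) ∣ z - s := by
  have norm_lt_iff (x : ℤ_[p]) : ‖x‖ < (p : ℝ) ^ (-j : ℤ) ↔ (p : ℤ_[p]) ^ (j + 1) ∣ x := by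
    rw [← Ideal.mem_span_singleton, ← PadicInt.norm_le_pow_iff_mem_span_pow,
      PadicInt.norm_le_pow_iff_norm_lt_pow_add_one]
    congr! 2
    push_cast
    ring
  have aeval_intCast (G : ℤ[X]) : aeval (s : ℤ_[p]) G = (G.eval s : ℤ) := by
    simpa using aeval_algebraMap_apply ℤ_[p] s G
  have hderiv : ‖aeval (s : ℤ_[p]) F.derivative‖ = (p : ℝ) ^ (-j : ℤ) := by
    rw [aeval_intCast]
    refine le_antisymm (PadicInt.norm_int_le_pow_iff_dvd.2 hdvd) (not_lt.1 fun hlt ↦ hndvd ?_)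
    exact_mod_cast (PadicInt.pow_p_dvd_int_iff _ _).1 ((norm_lt_iff _).1 hlt)
  have hp : (1 : ℝ) < p := mod_cast (Fact.out : p.Prime).one_lt
  have hval : ‖aeval (s : ℤ_[p]) F‖ < ‖aeval (s : ℤ_[p]) F.derivative‖ ^ 2 := by
    rw [hderiv, aeval_intCast]
    calc ‖((F.eval s : ℤ) : ℤ_[p])‖ ≤ (p : ℝ) ^ (-(2 * j + 1 : ℕ) : ℤ) :=
          PadicInt.norm_int_le_pow_iff_dvd.2 hF
      _ < (p : ℝ) ^ (-j * 2 : ℤ) := zpow_lt_zpow_right₀ hp (by push_cast; linarith)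
      _ = ((p : ℝ) ^ (-j : ℤ)) ^ 2 := by rw [zpow_mul]; norm_cast
  obtain ⟨z, hz, hclose, -⟩ := hensels_lemma hval
  exact ⟨z, hz, (norm_lt_iff _).1 (hderiv ▸ hclose)⟩

end PadicHoms

section Ramified

theorem exists_ringHom_zmod_ker_eq_of_card_quotient {R : Type*} [CommRing R] {p : ℕ}
    [hp : Fact p.Prime] {I : Ideal R} (hI : Nat.card (R ⧸ I) = p) :
    ∃ φ : R →+* ZMod p, RingHom.ker φ = I := by
  have : Finite (R ⧸ I) := Nat.finite_of_card_ne_zero (hI ▸ hp.out.ne_zero)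
  have := Fintype.ofFinite (R ⧸ I)
  let e := ZMod.ringEquivOfPrime (R ⧸ I) hp.out (by rw [← Nat.card_eq_fintype_card, hI])
  refine ⟨e.symm.toRingHom.comp (Ideal.Quotient.mk I), ?_⟩
  ext x
  simp [RingHom.mem_ker, Ideal.Quotient.eq_zero_iff_mem]

variable {R : Type*} [CommRing R] [IsDedekindDomain R] {P : Ideal R}

theorem absNorm_eq_of_pow_dvd_span_of_finrank_lt [Module.Free ℤ R] [Module.Finite ℤ R] {p q : ℕ}
    [hp : Fact p.Prime] (hP : P ≠ ⊤) (hdvd : P ^ q ∣ Ideal.span {(p : R)})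
    (hlt : Module.finrank ℤ R < 2 * q) : P.absNorm = p := by
  have norm_pow_dvd : P.absNorm ^ q ∣ p ^ Module.finrank ℤ R := by
    rw [← map_pow, ← Ideal.absNorm_span_natCast]
    exact map_dvd Ideal.absNorm hdvd
  obtain ⟨f, -, hf⟩ := (Nat.dvd_prime_pow hp.out).1
    ((dvd_pow_self P.absNorm (by lia : q ≠ 0)).trans norm_pow_dvd)
  have f_ne_zero : f ≠ 0 := by
    rintro rfl
    exact hP (Ideal.absNorm_eq_one_iff.1 (by simpa using hf))
  have f_mul_le : f * q ≤ Module.finrank ℤ R := by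
    rwa [hf, ← pow_mul, Nat.pow_dvd_pow_iff_le_right hp.out.one_lt] at norm_pow_dvd
  obtain rfl : f = 1 := by nlinarith [Nat.pos_of_ne_zero f_ne_zero]
  rw [hf, pow_one]

theorem pow_dvd_span_singleton_of_pow_mul_eq_pow_mul [P.IsPrime] {x y u v : R} {q k : ℕ}
    (h : x ^ q * u = y ^ k * v) (hqk : q.Coprime k) (hu : u ∉ P) (hv : v ∉ P) (hyP : y ∈ P)
    (hy : y ≠ 0) : P ^ q ∣ Ideal.span {y} := by
  obtain rfl | hq := eq_or_ne q 0
  · simp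
  have hx : x ≠ 0 := by
    rintro rfl
    have hv0 : v ≠ 0 := fun hv0 ↦ hv (hv0 ▸ P.zero_mem)
    simp [hq, hy, hv0, eq_comm] at h
  have hPprime : Prime P :=
    Ideal.prime_of_isPrime (fun hbot ↦ hy (by simpa [hbot] using hyP)) inferInstance
  have hxfin : FiniteMultiplicity P (Ideal.span {x}) := .of_prime_left hPprime (by simpa using hx)
  have hyfin : FiniteMultiplicity P (Ideal.span {y}) := .of_prime_left hPprime (by simpa using hy)
  have emultiplicity_of_notMem {w : R} (hw : w ∉ P) : emultiplicity P (Ideal.span {w}) = 0 :=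
    emultiplicity_eq_zero.2 (Ideal.dvd_span_singleton.not.2 hw)
  have hmult : q * emultiplicity P (Ideal.span {x}) = k * emultiplicity P (Ideal.span {y}) := by
    have := congrArg (fun w ↦ emultiplicity P (Ideal.span {w})) h
    simpa only [← Ideal.span_singleton_mul_span_singleton, ← Ideal.span_singleton_pow,
      emultiplicity_mul hPprime, emultiplicity_pow hPprime, emultiplicity_of_notMem hu,
      emultiplicity_of_notMem hv, add_zero] using this
  have hmult_nat : q * multiplicity P (Ideal.span {x}) = k * multiplicity P (Ideal.span {y}) := by
    rw [hxfin.emultiplicity_eq_multiplicity, hyfin.emultiplicity_eq_multiplicity] at hmult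
    exact_mod_cast hmult
  have q_dvd : q ∣ multiplicity P (Ideal.span {y}) :=
    hqk.dvd_of_dvd_mul_left (Dvd.intro _ hmult_nat)
  have multiplicity_pos : 0 < multiplicity P (Ideal.span {y}) :=
    Nat.pos_of_ne_zero (multiplicity_ne_zero.2 (Ideal.dvd_span_singleton.2 hyP))
  exact pow_dvd_of_le_multiplicity (Nat.le_of_dvd multiplicity_pos q_dvd)

end Ramified

section SepticTrinomial

/-- The polynomial `F = x ^ 7 + a x ^ 5 + b`, taken over `ℤ` so that it can be identified with the
minimal polynomial over `ℤ` of `θ : 𝓞 K`. -/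
noncomputable def septicTrinomial (a b : ℤ) : ℤ[X] := X ^ 7 + C a * X ^ 5 + C b

variable {a b : ℤ}

theorem monic_septicTrinomial : (septicTrinomial a b).Monic := by
  unfold septicTrinomial
  monicity!

theorem natDegree_septicTrinomial : (septicTrinomial a b).natDegree = 7 := by
  unfold septicTrinomial
  compute_degree!

theorem coeff_zero_septicTrinomial : (septicTrinomial a b).coeff 0 = b := by
  simp [septicTrinomial]

theorem aeval_septicTrinomial {A : Type*} [CommRing A] (x : A) :
    aeval x (septicTrinomial a b) = x ^ 7 + a * x ^ 5 + b := by
  simp [septicTrinomial]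

theorem map_septicTrinomial_rat : (septicTrinomial a b).map (algebraMap ℤ ℚ) =
    X ^ 7 + C (a : ℚ) * X ^ 5 + C (b : ℚ) := by
  simp [septicTrinomial]

theorem ne_zero_of_irreducible_septicTrinomial (h : Irreducible (septicTrinomial a b)) :
    b ≠ 0 := by
  rintro rfl
  have hroot : (septicTrinomial a 0).IsRoot 0 := by simp [septicTrinomial]
  have hdeg := natDegree_eq_of_degree_eq_some (degree_eq_one_of_irreducible_of_root h hroot)
  rw [natDegree_septicTrinomial] at hdeg
  exact absurd hdeg (by decide)

theorem exists_padicInt_root_septicTrinomial_of_isUnit (ha : a ≡ 7 [ZMOD 8]) (hb : b ≡ 0 [ZMOD 8])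
    {s : ℤ} (hs : IsUnit s) :
    ∃ z : ℤ_[2], aeval z (septicTrinomial a b) = 0 ∧ (4 : ℤ_[2]) ∣ z - s := by
  have hs2 : s ^ 2 = 1 := Int.isUnit_sq hs
  have ha8 : 8 ∣ a - 7 := ha.symm.dvd
  have hb8 : 8 ∣ b := Int.modEq_zero_iff_dvd.1 hb
  have hval : (septicTrinomial a b).eval s = (a + 1) * s + b := by
    simp only [septicTrinomial, eval_add, eval_mul, eval_pow, eval_X, eval_C]
    linear_combination (s * (s ^ 4 + s ^ 2 + 1) + a * s * (s ^ 2 + 1)) * hs2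
  have hderiv : (septicTrinomial a b).derivative.eval s = 7 + 5 * a := by
    have : (septicTrinomial a b).derivative.eval s = 7 * s ^ 6 + a * (5 * s ^ 4) := by
      simp [septicTrinomial]
    linear_combination this + (7 * (s ^ 4 + s ^ 2 + 1) + 5 * a * (s ^ 2 + 1)) * hs2
  have eight_dvd_eval : ((2 : ℕ) : ℤ) ^ (2 * 1 + 1) ∣ (septicTrinomial a b).eval s := by
    rw [hval]
    exact dvd_add (Dvd.dvd.mul_right (by lia) s) hb8
  obtain ⟨z, hz, hclose⟩ := exists_padicInt_aeval_eq_zero_of_pow_dvd (j := 1) eight_dvd_eval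
    (by rw [hderiv]; push_cast; lia) (by rw [hderiv]; push_cast; lia)
  have two_pow : ((2 : ℕ) : ℤ_[2]) ^ (1 + 1) = 4 := by norm_num
  exact ⟨z, hz, two_pow ▸ hclose⟩

/-- Substituting `x = 2 ^ m * z` and dividing by `2 ^ (5 * m)` leaves
`2 ^ (2 * m) * z ^ 7 + a * z ^ 5 + c`, of which `1` is a simple root modulo `2`. -/
theorem exists_padicInt_root_septicTrinomial_of_eq_pow_five_mul {m : ℕ} {c : ℤ} (ha : Odd a)
    (hc : Odd c) (hm : m ≠ 0) :
    ∃ r : ℤ_[2], aeval r (septicTrinomial a (2 ^ (5 * m) * c)) = 0 ∧ PadicInt.toZMod r = 0 := by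
  let F : ℤ[X] := C (2 ^ (2 * m)) * X ^ 7 + C a * X ^ 5 + C c
  have hpow : (2 : ℤ) ∣ 2 ^ (2 * m) := dvd_pow_self 2 (by lia)
  have hval : F.eval 1 = 2 ^ (2 * m) + a + c := by simp [F]
  have hderiv : F.derivative.eval 1 = 2 ^ (2 * m) * 7 + a * 5 := by simp [F, -eq_intCast, -map_pow]
  have ha' := Int.odd_iff.1 ha
  have hc' := Int.odd_iff.1 hc
  obtain ⟨z, hz, -⟩ := exists_padicInt_aeval_eq_zero_of_pow_dvd (p := 2) (j := 0) (F := F) (s := 1)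
    (by rw [hval]; push_cast; lia) (by simp) (by rw [hderiv]; push_cast; lia)
  have hz' : 2 ^ (2 * m) * z ^ 7 + a * z ^ 5 + c = 0 := by simpa [F, map_ofNat] using hz
  refine ⟨2 ^ m * z, ?_, toZMod_eq_zero_iff_dvd.2 ?_⟩
  · rw [aeval_septicTrinomial]
    push_cast
    linear_combination 2 ^ (5 * m) * hz'
  · exact_mod_cast (dvd_pow_self (2 : ℤ_[2]) hm).mul_right z

variable {K : Type*} [Field K] [NumberField K] {θ : 𝓞 K}

theorem exists_ringHom_zmod_two_of_not_five_dvd {k : ℕ} {c : ℤ}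
    (hgen : Algebra.adjoin ℚ {(θ : K)} = ⊤)
    (hθ : minpoly ℤ θ = septicTrinomial a (2 ^ k * c)) (ha : Odd a) (hc : Odd c) (hk : ¬ 5 ∣ k) :
    ∃ φ : 𝓞 K →+* ZMod 2, φ θ = 0 := by
  have hk0 : k ≠ 0 := by rintro rfl; simp at hk
  obtain ⟨P, hmax, hPint, hθP⟩ := exists_isMaximal_mem_of_dvd_coeff_zero_minpoly Nat.prime_two hgen
    (by rw [hθ, coeff_zero_septicTrinomial]; exact (dvd_pow_self _ hk0).mul_right c)
  have hrel : θ ^ 5 * (θ ^ 2 + a) = ((2 : ℕ) : 𝓞 K) ^ k * (-c : ℤ) := by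
    have := minpoly.aeval ℤ θ
    rw [hθ, aeval_septicTrinomial] at this
    push_cast at this ⊢
    linear_combination this
  have notMem_of_odd {n : ℤ} (hn : Odd n) : (n : 𝓞 K) ∉ P := by
    rw [hPint, Nat.cast_ofNat, ← even_iff_two_dvd, Int.not_even_iff_odd]; exact hn
  have hu : θ ^ 2 + (a : 𝓞 K) ∉ P := fun h ↦
    notMem_of_odd ha ((P.add_mem_iff_right (P.pow_mem_of_mem hθP 2 two_pos)).1 h)
  have hram : P ^ 5 ∣ Ideal.span {((2 : ℕ) : 𝓞 K)} :=
    pow_dvd_span_singleton_of_pow_mul_eq_pow_mul hrel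
      ((Nat.Prime.coprime_iff_not_dvd Nat.prime_five).2 hk) hu (notMem_of_odd hc.neg)
      (by exact_mod_cast (hPint 2).2 dvd_rfl) (by simp)
  obtain ⟨φ, hφ⟩ := exists_ringHom_zmod_ker_eq_of_card_quotient
    (absNorm_eq_of_pow_dvd_span_of_finrank_lt hmax.ne_top hram
      (by rw [finrank_int_eq_natDegree_minpoly hgen, hθ, natDegree_septicTrinomial]; norm_num))
  exact ⟨φ, by rwa [← RingHom.mem_ker, hφ]⟩

theorem exists_ringHom_zmod_two_map_eq_zero (hgen : Algebra.adjoin ℚ {(θ : K)} = ⊤)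
    (hθ : minpoly ℤ θ = septicTrinomial a b) (ha : Odd a) (hb : Even b) :
    ∃ φ : 𝓞 K →+* ZMod 2, φ θ = 0 := by
  have hb0 : b ≠ 0 := ne_zero_of_irreducible_septicTrinomial
    (hθ ▸ minpoly.irreducible (Algebra.IsIntegral.isIntegral θ))
  obtain ⟨k, c, hc, rfl⟩ : ∃ (k : ℕ) (c : ℤ), Odd c ∧ b = 2 ^ k * c := by
    obtain ⟨c, hbc, hc⟩ := (Int.finiteMultiplicity_iff.2 ⟨by norm_num, hb0⟩ :
      FiniteMultiplicity 2 b).exists_eq_pow_mul_and_not_dvd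
    exact ⟨_, c, Int.not_even_iff_odd.1 (even_iff_two_dvd.not.2 hc), hbc⟩
  by_cases hk : 5 ∣ k
  · obtain ⟨m, rfl⟩ := hk
    have hm : m ≠ 0 := by
      rintro rfl
      exact Int.not_even_iff_odd.2 hc (by simpa using hb)
    obtain ⟨r, hr, hr0⟩ := exists_padicInt_root_septicTrinomial_of_eq_pow_five_mul ha hc hm
    obtain ⟨φ, hφ⟩ := exists_ringHom_padicInt_of_aeval_minpoly_eq_zero hgen (hθ ▸ hr)
    exact ⟨PadicInt.toZMod.comp φ, by rw [RingHom.comp_apply, hφ, hr0]⟩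
  · exact exists_ringHom_zmod_two_of_not_five_dvd hgen hθ ha hc hk

theorem exists_ringHom_padicInt_four_dvd_sub (hgen : Algebra.adjoin ℚ {(θ : K)} = ⊤)
    (hθ : minpoly ℤ θ = septicTrinomial a b) (ha : a ≡ 7 [ZMOD 8]) (hb : b ≡ 0 [ZMOD 8])
    {s : ℤ} (hs : IsUnit s) : ∃ φ : 𝓞 K →+* ℤ_[2], (4 : ℤ_[2]) ∣ φ θ - s := by
  obtain ⟨z, hz, hclose⟩ := exists_padicInt_root_septicTrinomial_of_isUnit ha hb hs
  obtain ⟨φ, hφ⟩ := exists_ringHom_padicInt_of_aeval_minpoly_eq_zero hgen (hθ ▸ hz)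
  exact ⟨φ, hφ ▸ hclose⟩

theorem toZMod_two_eq_one_of_four_dvd_sub {z : ℤ_[2]} {s : ℤ} (hs : IsUnit s)
    (h : (4 : ℤ_[2]) ∣ z - s) : PadicInt.toZMod z = 1 := by
  have hmod : PadicInt.toZMod (z - (s : ℤ_[2])) = 0 := toZMod_eq_zero_iff_dvd.2
    (((by norm_num : ((2 : ℕ) : ℤ_[2]) * 2 = 4) ▸ dvd_mul_right _ _ : _ ∣ (4 : ℤ_[2])).trans h)
  rw [map_sub, map_intCast, sub_eq_zero] at hmod
  rw [hmod]
  rcases Int.isUnit_iff.1 hs with rfl | rfl <;> decide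

theorem exists_injective_fin_three_ringHom (hgen : Algebra.adjoin ℚ {(θ : K)} = ⊤)
    (hθ : minpoly ℤ θ = septicTrinomial a b) (ha : a ≡ 7 [ZMOD 8]) (hb : b ≡ 0 [ZMOD 8]) :
    ∃ φ : Fin 3 → 𝓞 K →+* ZMod 2, Function.Injective φ := by
  have ha_odd : Odd a := Int.odd_iff.2 (ha.of_dvd (by norm_num : (2 : ℤ) ∣ 8))
  have hb_even : Even b := Int.even_iff.2 (hb.of_dvd (by norm_num : (2 : ℤ) ∣ 8))
  obtain ⟨φ₀, hφ₀⟩ := exists_ringHom_zmod_two_map_eq_zero hgen hθ ha_odd hb_even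
  obtain ⟨φ₁, hφ₁⟩ := exists_ringHom_padicInt_four_dvd_sub hgen hθ ha hb isUnit_one
  obtain ⟨φ₂, hφ₂⟩ := exists_ringHom_padicInt_four_dvd_sub hgen hθ ha hb isUnit_one.neg
  have h₁ := toZMod_two_eq_one_of_four_dvd_sub isUnit_one hφ₁
  have h₂ := toZMod_two_eq_one_of_four_dvd_sub isUnit_one.neg hφ₂
  have h₀₁ : φ₀ ≠ PadicInt.toZMod.comp φ₁ := by
    rintro rfl
    simp [h₁] at hφ₀
  have h₀₂ : φ₀ ≠ PadicInt.toZMod.comp φ₂ := by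
    rintro rfl
    simp [h₂] at hφ₀
  have h₁₂ : PadicInt.toZMod.comp φ₁ ≠ PadicInt.toZMod.comp φ₂ := fun h ↦ by
    rw [ringHom_padicInt_ext_of_toZMod h] at hφ₁
    have four_dvd_two : ((2 : ℕ) : ℤ_[2]) ^ 2 ∣ (2 : ℤ) := by
      convert dvd_sub hφ₂ hφ₁ using 1 <;> push_cast <;> ring
    rw [PadicInt.pow_p_dvd_int_iff] at four_dvd_two
    norm_num at four_dvd_two
  refine ⟨![φ₀, PadicInt.toZMod.comp φ₁, PadicInt.toZMod.comp φ₂], ?_⟩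
  simp [Function.Injective, Fin.forall_fin_succ, h₀₁, h₀₂, h₁₂, h₀₁.symm, h₀₂.symm, h₁₂.symm]

theorem minpoly_eq_septicTrinomial
    (hirr : Irreducible (X ^ 7 + C (a : ℚ) * X ^ 5 + C (b : ℚ)))
    (hroot : aeval θ (septicTrinomial a b) = 0) : minpoly ℤ θ = septicTrinomial a b := by
  rw [← map_septicTrinomial_rat] at hirr
  refine (map_injective _ (algebraMap ℤ ℚ).injective_int ?_).symm
  rw [← minpoly_rat_eq_map_minpoly_int]
  refine minpoly.eq_of_irreducible_of_monic hirr ?_ (monic_septicTrinomial.map _)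
  rw [aeval_map_algebraMap, aeval_algebraMap_apply, hroot, map_zero]

end SepticTrinomial

/-- If `K = ℚ(θ)` with `θ` a root of the irreducible trinomial `x^7 + a x^5 + b` where
`a ≡ 7 (mod 8)` and `b ≡ 0 (mod 8)`, then `2` is a common index divisor of `K`: it divides the index of every
integral generator `η` of `K`; hence `K` is not monogenic. -/
theorem two_dvd_index_case_C10_C11
    (a b : ℤ) (ha : a ≡ 7 [ZMOD 8]) (hb : b ≡ 0 [ZMOD 8])
    (hirr : Irreducible (X ^ 7 + C (a : ℚ) * X ^ 5 + C (b : ℚ)))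
    (K : Type*) [Field K] [NumberField K] (θ : K)
    (hroot : θ ^ 7 + (a : K) * θ ^ 5 + (b : K) = 0)
    (hgen : Algebra.adjoin ℚ {θ} = ⊤) :
    (∀ η : 𝓞 K, Algebra.adjoin ℚ {(η : K)} = ⊤ →
        2 ∣ (Algebra.adjoin ℤ {η}).toSubring.toAddSubgroup.index) ∧
      ¬ ∃ η : 𝓞 K, Algebra.adjoin ℤ {η} = ⊤ := by
  have hrootK : aeval θ (septicTrinomial a b) = 0 := by rw [aeval_septicTrinomial, hroot]
  have hint : IsIntegral ℤ θ := ⟨_, monic_septicTrinomial, hrootK⟩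
  obtain ⟨θ, rfl⟩ : ∃ x : 𝓞 K, (x : K) = θ := ⟨⟨θ, hint⟩, rfl⟩
  have hrootO : aeval θ (septicTrinomial a b) = 0 :=
    RingOfIntegers.coe_injective (by rwa [← aeval_algebraMap_apply, map_zero])
  obtain ⟨φ, hφ⟩ :=
    exists_injective_fin_three_ringHom hgen (minpoly_eq_septicTrinomial hirr hrootO) ha hb
  have two_dvd_index (η : 𝓞 K) : 2 ∣ (Algebra.adjoin ℤ {η}).toSubring.toAddSubgroup.index :=
    prime_dvd_index_adjoin_singleton_of_lt_card hφ (by simp) η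
  refine ⟨fun η _ ↦ two_dvd_index η, ?_⟩
  rintro ⟨η, hη⟩
  have index_eq_one : (Algebra.adjoin ℤ {η}).toSubring.toAddSubgroup.index = 1 :=
    AddSubgroup.index_eq_one.2 (by ext; simp [hη])
  exact absurd (two_dvd_index η) (by rw [index_eq_one]; norm_num)
end

section
/- The polynomial x^7 + 45927 x^5 + 24 is irreducible over ℚ (Eisenstein at 3), and the associated septic field K is not monogenic; in fact 2 divides the index of every integral generator of K. -/
open NumberField Polynomial

/-!
If a ring has more than `p` homomorphisms to `𝔽_p`, then two of them agree at any given `η`, hence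
on `ℤ[η]`, and so `p` divides the index of `ℤ[η]`. Let `θ` be a root of the irreducible trinomial
`x ^ (m + 2) + a x ^ m + b`, where `m ≥ 3`, `a ≡ 7 (mod 8)` and `k = v₂(b) ≥ 3` is prime to `m`.
The ring of integers of `ℚ(θ)` has at least three homomorphisms to `𝔽₂`.

* By Hensel's lemma the trinomial has roots in `ℤ₂` congruent to `1` and to `-1` modulo `4`. Both
  send `θ` to `1 ∈ 𝔽₂`, but they differ at the algebraic integer `θ ^ m (θ - 1) / 2`.
* Let `P` be a prime above `2` containing `θ`. From `θ ^ m (θ ^ 2 + a) = -b` we get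
  `m v_P(θ) = k v_P(2)`, so `m` divides `v_P(2)`. As `2 m > m + 2`, the residue field of `P` is
  `𝔽₂`, and the reduction modulo `P` sends `θ` to `0`.
-/

section PrimeMultiplicity

variable {M : Type*} [CommMonoidWithZero M] [IsCancelMulZero M] [WfDvdMonoid M]

theorem prime_pow_dvd_of_pow_mul_eq_pow_mul {p x y u v : M} {m k : ℕ} (hp : Prime p)
    (hmk : m.Coprime k) (hu : ¬ p ∣ u) (hv : ¬ p ∣ v) (hy : p ∣ y)
    (h : x ^ m * u = y ^ k * v) : p ^ m ∣ y := by
  rcases eq_or_ne m 0 with rfl | hm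
  · simp
  rcases eq_or_ne y 0 with rfl | hy0
  · exact dvd_zero _
  have hv0 : v ≠ 0 := fun hv0 ↦ hv (hv0 ▸ dvd_zero p)
  have hx0 : x ≠ 0 := by
    rintro rfl
    rw [zero_pow hm, zero_mul] at h
    exact mul_ne_zero (pow_ne_zero k hy0) hv0 h.symm
  have hfx := FiniteMultiplicity.of_prime_left hp hx0
  have hfy := FiniteMultiplicity.of_prime_left hp hy0
  have multiplicity_eq : m * multiplicity p x = k * multiplicity p y := by
    have := congrArg (emultiplicity p) h
    rw [emultiplicity_mul hp, emultiplicity_mul hp, emultiplicity_pow hp, emultiplicity_pow hp,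
      emultiplicity_eq_zero.2 hu, emultiplicity_eq_zero.2 hv, hfx.emultiplicity_eq_multiplicity,
      hfy.emultiplicity_eq_multiplicity] at this
    exact_mod_cast this
  have dvd_multiplicity : m ∣ multiplicity p y := hmk.dvd_of_dvd_mul_left ⟨_, multiplicity_eq.symm⟩
  exact pow_dvd_of_le_multiplicity
    (Nat.le_of_dvd (Nat.pos_of_ne_zero (multiplicity_ne_zero.2 hy)) dvd_multiplicity)

end PrimeMultiplicity

section Index

variable {R : Type*} [Ring R] {p : ℕ} [Fact p.Prime]

theorem prime_dvd_index_of_le_eqLocus {φ ψ : R →+* ZMod p} (hne : φ ≠ ψ) {S : Subring R}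
    (hS : S ≤ φ.eqLocus ψ) : p ∣ S.toAddSubgroup.index := by
  obtain ⟨x, hx⟩ := DFunLike.ne_iff.1 hne
  have hmem : φ (S.toAddSubgroup.index • x) = ψ (S.toAddSubgroup.index • x) :=
    hS (AddSubgroup.nsmul_index_mem S.toAddSubgroup x)
  rw [map_nsmul, map_nsmul, nsmul_eq_mul, nsmul_eq_mul] at hmem
  rw [← ZMod.natCast_eq_zero_iff]
  by_contra hindex
  exact hx (mul_left_cancel₀ hindex hmem)

theorem prime_dvd_index_adjoin_of_card_lt {ι : Type*} [Fintype ι] {φ : ι → R →+* ZMod p}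
    (hφ : Function.Injective φ) (hcard : p < Fintype.card ι) (η : R) :
    p ∣ (Algebra.adjoin ℤ {η}).toSubring.toAddSubgroup.index := by
  obtain ⟨i, j, hij, hη⟩ := Fintype.exists_ne_map_eq_of_card_lt (fun i ↦ φ i η)
    (by rwa [ZMod.card])
  refine prime_dvd_index_of_le_eqLocus (hφ.ne hij) ?_
  have hle : Algebra.adjoin ℤ {η} ≤
      AlgHom.equalizer (φ i).toIntAlgHom (φ j).toIntAlgHom :=
    Algebra.adjoin_le (Set.singleton_subset_iff.2 hη)
  exact hle

end Index

theorem dvd_of_sq_add_mul_add_eq_zero {R : Type*} [CommRing R] [IsDomain R] [IsIntegrallyClosed R]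
    {d x c e : R} (h : x ^ 2 + d * c * x + d ^ 2 * e = 0) : d ∣ x := by
  rcases eq_or_ne d 0 with rfl | hd
  · simp_all
  let ι := algebraMap R (FractionRing R)
  have hιd : ι d ≠ 0 := by simpa [ι] using hd
  have hint : IsIntegral R (ι x / ι d) := by
    refine ⟨X ^ 2 + C c * X + C e, by monicity!, ?_⟩
    have := congrArg ι h
    simp only [map_add, map_mul, map_pow, map_zero] at this
    simp only [eval₂_add, eval₂_mul, eval₂_pow, eval₂_X, eval₂_C]
    field_simp
    linear_combination this
  obtain ⟨y, hy⟩ := IsIntegrallyClosed.isIntegral_iff.1 hint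
  refine ⟨y, IsFractionRing.injective R (FractionRing R) ?_⟩
  rw [map_mul, hy, mul_div_cancel₀ _ hιd]

theorem exists_padicInt_root_of_pow_dvd {p : ℕ} [Fact p.Prime] {F : ℤ[X]} {u : ℤ} {r : ℕ}
    (hF : (p : ℤ) ^ (2 * r + 1) ∣ F.eval u) (hdvd : (p : ℤ) ^ r ∣ F.derivative.eval u)
    (hndvd : ¬ (p : ℤ) ^ (r + 1) ∣ F.derivative.eval u) :
    ∃ z : ℤ_[p], aeval z F = 0 ∧ (p : ℤ_[p]) ^ (r + 1) ∣ z - u := by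
  have aeval_intCast (G : ℤ[X]) : aeval (u : ℤ_[p]) G = (G.eval u : ℤ) := by
    rw [← eq_intCast (algebraMap ℤ ℤ_[p]), aeval_algebraMap_apply_eq_algebraMap_eval, eq_intCast]
  have norm_le : ‖aeval (u : ℤ_[p]) F‖ ≤ (p : ℝ) ^ (-(2 * r + 1 : ℕ) : ℤ) := by
    rwa [aeval_intCast, PadicInt.norm_int_le_pow_iff_dvd]
  have norm_derivative : ‖aeval (u : ℤ_[p]) F.derivative‖ = (p : ℝ) ^ (-r : ℤ) := by
    refine le_antisymm (by rwa [aeval_intCast, PadicInt.norm_int_le_pow_iff_dvd]) ?_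
    by_contra! hlt
    rw [PadicInt.norm_lt_pow_iff_norm_le_pow_sub_one, ← neg_add', aeval_intCast] at hlt
    exact hndvd (PadicInt.norm_int_le_pow_iff_dvd.1 (by exact_mod_cast hlt))
  have hp : (1 : ℝ) < p := mod_cast (Fact.out : p.Prime).one_lt
  have norm_lt : ‖aeval (u : ℤ_[p]) F‖ < ‖aeval (u : ℤ_[p]) F.derivative‖ ^ 2 := by
    rw [norm_derivative, ← zpow_natCast, ← zpow_mul]
    refine norm_le.trans_lt (zpow_lt_zpow_right₀ hp ?_)
    push_cast
    linarith
  obtain ⟨z, hz, hzu, -⟩ := hensels_lemma norm_lt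
  refine ⟨z, hz, ?_⟩
  rw [norm_derivative, PadicInt.norm_lt_pow_iff_norm_le_pow_sub_one, ← neg_add'] at hzu
  rw [← Ideal.mem_span_singleton, ← PadicInt.norm_le_pow_iff_mem_span_pow]
  exact_mod_cast hzu

section AbsNorm

variable {R : Type*} [CommRing R] [IsDedekindDomain R] [Module.Free ℤ R] [Module.Finite ℤ R] {p : ℕ}

theorem absNorm_eq_of_pow_dvd_span (hp : p.Prime) {P : Ideal R} (hP : P ≠ ⊤) {e : ℕ}
    (hdvd : P ^ e ∣ Ideal.span {(p : R)}) (he : Module.finrank ℤ R < 2 * e) :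
    Ideal.absNorm P = p := by
  have norm_pow_dvd : Ideal.absNorm P ^ e ∣ p ^ Module.finrank ℤ R := by
    simpa only [map_pow, Ideal.absNorm_span_natCast] using map_dvd Ideal.absNorm hdvd
  obtain ⟨j, -, hj⟩ := (Nat.dvd_prime_pow hp).1
    ((dvd_pow_self _ (by lia : e ≠ 0)).trans norm_pow_dvd)
  have hj0 : j ≠ 0 := by
    rintro rfl
    exact hP (Ideal.absNorm_eq_one_iff.1 hj)
  have hje : j * e < 2 * e := by
    rw [hj, ← pow_mul, Nat.pow_dvd_pow_iff_le_right hp.one_lt] at norm_pow_dvd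
    exact norm_pow_dvd.trans_lt he
  have hj1 : j = 1 := by
    have := Nat.lt_of_mul_lt_mul_right hje
    lia
  rw [hj, hj1, pow_one]

end AbsNorm

theorem exists_ringHom_zmod_ker_eq {R : Type*} [CommRing R] {p : ℕ} (hp : p.Prime) {P : Ideal R}
    (hP : Nat.card (R ⧸ P) = p) : ∃ φ : R →+* ZMod p, RingHom.ker φ = P := by
  have : Finite (R ⧸ P) := Nat.finite_of_card_ne_zero (hP ▸ hp.ne_zero)
  have := Fintype.ofFinite (R ⧸ P)
  let e := ZMod.ringEquivOfPrime (R ⧸ P) hp (by rwa [← Nat.card_eq_fintype_card])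
  refine ⟨e.symm.toRingHom.comp (Ideal.Quotient.mk P), ?_⟩
  rw [RingHom.ker_equiv_comp, Ideal.mk_ker]

section PrimitiveInteger

variable {K : Type*} [Field K] [NumberField K] {t : 𝓞 K} {f : ℤ[X]}

theorem minpoly_rat_eq_map (hf : f.Monic) (hirr : Irreducible f) (hroot : aeval t f = 0) :
    minpoly ℚ (t : K) = f.map (algebraMap ℤ ℚ) := by
  refine (minpoly.eq_of_irreducible_of_monic
    ((hf.irreducible_iff_irreducible_map_fraction_map).1 hirr) ?_ (hf.map _)).symm
  rw [aeval_map_algebraMap, aeval_algebraMap_apply, hroot, map_zero]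

theorem finrank_ringOfIntegers_eq_natDegree (hf : f.Monic) (hirr : Irreducible f)
    (hroot : aeval t f = 0) (htop : Algebra.adjoin ℚ {(t : K)} = ⊤) :
    Module.finrank ℤ (𝓞 K) = f.natDegree := by
  let pb := PowerBasis.ofAdjoinEqTop (Algebra.IsIntegral.isIntegral (t : K)) htop
  rw [RingOfIntegers.rank, pb.finrank, ← pb.natDegree_minpoly,
    PowerBasis.ofAdjoinEqTop_gen, minpoly_rat_eq_map hf hirr hroot, hf.natDegree_map]

theorem norm_eq_neg_one_pow_mul_coeff_zero (hf : f.Monic) (hirr : Irreducible f)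
    (hroot : aeval t f = 0) (htop : Algebra.adjoin ℚ {(t : K)} = ⊤) :
    Algebra.norm ℤ t = (-1) ^ f.natDegree * f.coeff 0 := by
  let pb := PowerBasis.ofAdjoinEqTop (Algebra.IsIntegral.isIntegral (t : K)) htop
  have hnorm := Algebra.PowerBasis.norm_gen_eq_coeff_zero_minpoly pb
  rw [← pb.natDegree_minpoly, PowerBasis.ofAdjoinEqTop_gen, minpoly_rat_eq_map hf hirr hroot,
    hf.natDegree_map, coeff_map, ← Algebra.coe_norm_int, eq_intCast] at hnorm
  exact_mod_cast hnorm

theorem exists_ringHom_padicInt_apply_eq {p : ℕ} [Fact p.Prime] (hf : f.Monic)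
    (hirr : Irreducible f) (hroot : aeval t f = 0) (htop : Algebra.adjoin ℚ {(t : K)} = ⊤)
    {z : ℤ_[p]} (hz : aeval z f = 0) : ∃ φ : 𝓞 K →+* ℤ_[p], φ t = z := by
  let pb := PowerBasis.ofAdjoinEqTop (Algebra.IsIntegral.isIntegral (t : K)) htop
  have hgen : pb.gen = t := PowerBasis.ofAdjoinEqTop_gen _ _
  have aeval_minpoly : aeval (algebraMap ℤ_[p] ℚ_[p] z) (minpoly ℚ pb.gen) = 0 := by
    rw [hgen, minpoly_rat_eq_map hf hirr hroot, aeval_map_algebraMap, aeval_algebraMap_apply, hz,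
      map_zero]
  let ψ : K →ₐ[ℚ] ℚ_[p] := pb.lift _ aeval_minpoly
  have hψ : ψ t = z := by
    rw [← hgen]
    exact pb.lift_gen _ aeval_minpoly
  have mem_padicInt (x : 𝓞 K) : ψ x ∈ PadicInt.subring p := by
    have hx : IsIntegral ℤ_[p] (ψ x) :=
      ((RingOfIntegers.isIntegral_coe x).map (ψ.restrictScalars ℤ)).tower_top
    obtain ⟨y, hy⟩ := IsIntegrallyClosed.isIntegral_iff.1 hx
    exact hy ▸ y.2
  exact ⟨((ψ : K →+* ℚ_[p]).comp (algebraMap (𝓞 K) K)).codRestrict (PadicInt.subring p)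
    mem_padicInt, Subtype.ext hψ⟩

end PrimitiveInteger

/-- The trinomial `x ^ (m + 2) + a x ^ m + b`, the family containing `x ^ 7 + 45927 x ^ 5 + 24`.
The gap between the two top exponents is fixed to be two, so that over `𝔽₂` with `a` odd and `b`
even it is `x ^ m (x + 1) ^ 2`. -/
noncomputable def gapTwoTrinomial {R : Type*} [Semiring R] (m : ℕ) (a b : R) : R[X] :=
  X ^ (m + 2) + C a * X ^ m + C b

namespace gapTwoTrinomial

section CommRing

variable {R : Type*} [CommRing R]

section Basic

variable (m : ℕ) (a b : R)

theorem monic : (gapTwoTrinomial m a b).Monic := by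
  unfold gapTwoTrinomial
  monicity
  all_goals simp

theorem natDegree_eq [Nontrivial R] : (gapTwoTrinomial m a b).natDegree = m + 2 := by
  unfold gapTwoTrinomial
  compute_degree!

theorem map_eq {S : Type*} [CommRing S] (g : R →+* S) :
    (gapTwoTrinomial m a b).map g = gapTwoTrinomial m (g a) (g b) := by
  simp [gapTwoTrinomial]

theorem aeval_eq {S : Type*} [CommRing S] [Algebra R S] (x : S) :
    aeval x (gapTwoTrinomial m a b) =
      x ^ (m + 2) + algebraMap R S a * x ^ m + algebraMap R S b := by
  simp [gapTwoTrinomial]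

theorem mul_eval_derivative (u : R) :
    u * (gapTwoTrinomial m a b).derivative.eval u = u ^ m * ((m + 2) * u ^ 2 + m * a) := by
  rcases m with _ | m <;> simp [gapTwoTrinomial] <;> ring

end Basic

variable {m : ℕ} {a b : R}

theorem coeff_zero_eq (hm : m ≠ 0) : (gapTwoTrinomial m a b).coeff 0 = b := by
  simp [gapTwoTrinomial, hm.symm]

theorem irreducible_of_eisenstein [IsDomain R] {q : R} (hm : m ≠ 0) (hq : Prime q)
    (hqa : q ∣ a) (hqb : q ∣ b) (hqqb : ¬ q ^ 2 ∣ b) : Irreducible (gapTwoTrinomial m a b) := by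
  have hprime : (Ideal.span {q}).IsPrime := (Ideal.span_singleton_prime hq.ne_zero).2 hq
  have coeff_mem {n : ℕ} (hn : n < (gapTwoTrinomial m a b).natDegree) :
      (gapTwoTrinomial m a b).coeff n ∈ Ideal.span {q} := by
    rw [natDegree_eq] at hn
    simp only [gapTwoTrinomial, coeff_add, coeff_X_pow, coeff_C_mul, coeff_C, hn.ne, if_false,
      zero_add, Ideal.mem_span_singleton]
    refine dvd_add (hqa.mul_right _) ?_
    split_ifs
    exacts [hqb, dvd_zero q]
  refine ((monic m a b).isEisensteinAt_of_mem_of_notMem hprime.ne_top coeff_mem ?_).irreducible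
    hprime (monic m a b).isPrimitive (by simp [natDegree_eq])
  rwa [coeff_zero_eq hm, Ideal.span_singleton_pow, Ideal.mem_span_singleton]

theorem two_dvd_pow_mul_sub_one {S : Type*} [CommRing S] [IsDomain S] [IsIntegrallyClosed S]
    [Algebra R S] {t : S} (ha : 4 ∣ a + 1) (hb : 4 ∣ b)
    (hroot : aeval t (gapTwoTrinomial m a b) = 0) : 2 ∣ t ^ m * (t - 1) := by
  obtain ⟨r, hr⟩ := ha
  obtain ⟨s, hs⟩ := hb
  have hr' := congrArg (algebraMap R S) hr
  have hs' := congrArg (algebraMap R S) hs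
  simp only [map_add, map_mul, map_one, map_ofNat] at hr' hs'
  rw [aeval_eq] at hroot
  refine dvd_of_sq_add_mul_add_eq_zero (c := t ^ m)
    (e := t ^ m * (algebraMap R S r * t ^ m + algebraMap R S s)) ?_
  linear_combination t ^ m * hroot - (t ^ m) ^ 2 * hr' - t ^ m * hs'

end CommRing

theorem exists_padicInt_root {m : ℕ} {a b u : ℤ} (ha : 8 ∣ a + 1) (hb : 8 ∣ b) (hu : Odd u) :
    ∃ z : ℤ_[2], aeval z (gapTwoTrinomial m a b) = 0 ∧ 4 ∣ z - u := by
  have hsq : 8 ∣ u ^ 2 - 1 := Int.eight_dvd_sq_sub_one_of_odd hu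
  have dvd_eval : 8 ∣ (gapTwoTrinomial m a b).eval u := by
    have : (gapTwoTrinomial m a b).eval u = u ^ m * (u ^ 2 - 1 + (a + 1)) + b := by
      simp only [gapTwoTrinomial, eval_add, eval_mul, eval_pow, eval_X, eval_C]
      ring
    rw [this]
    exact dvd_add ((dvd_add hsq ha).mul_left _) hb
  obtain ⟨d, hd, derivative_eval⟩ :
      ∃ d, Odd d ∧ u * (gapTwoTrinomial m a b).derivative.eval u = 2 * d := by
    obtain ⟨r, hr⟩ := ha
    obtain ⟨s, hs⟩ := hsq
    refine ⟨u ^ m * (2 * (2 * ((m + 2) * s + m * r)) + 1), hu.pow.mul ⟨_, rfl⟩, ?_⟩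
    rw [mul_eval_derivative]
    linear_combination u ^ m * ((m + 2) * hs + m * hr)
  have hu2 : IsCoprime (2 : ℤ) u := Int.isCoprime_two_left.2 hu
  obtain ⟨z, hz, hzu⟩ := exists_padicInt_root_of_pow_dvd (p := 2) (r := 1) dvd_eval
    (by simpa using hu2.dvd_of_dvd_mul_left ⟨d, derivative_eval⟩)
    (fun four_dvd ↦ by
      have : (4 : ℤ) ∣ 2 * d := derivative_eval ▸ four_dvd.mul_left u
      grind)
  have four_eq : ((2 : ℕ) : ℤ_[2]) ^ (1 + 1) = 4 := by norm_num
  exact ⟨z, hz, four_eq ▸ hzu⟩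

theorem pow_dvd_span_of_mem {R : Type*} [CommRing R] [IsDedekindDomain R] [CharZero R] {t : R}
    {m k p : ℕ} {a c : ℤ} (hp : p.Prime) (hmk : m.Coprime k) (ha : ¬ (p : ℤ) ∣ a)
    (hc : ¬ (p : ℤ) ∣ c) (hroot : aeval t (gapTwoTrinomial m a (p ^ k * c)) = 0) {P : Ideal R}
    (hP : P.IsPrime) (hPp : P.under ℤ = Ideal.span {(p : ℤ)}) (htP : t ∈ P) :
    P ^ m ∣ Ideal.span {(p : R)} := by
  have intCast_mem_iff (n : ℤ) : (n : R) ∈ P ↔ (p : ℤ) ∣ n := by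
    rw [← Ideal.mem_span_singleton, ← hPp, Ideal.mem_comap, eq_intCast]
  have hpP : (p : R) ∈ P := mod_cast (intCast_mem_iff p).2 dvd_rfl
  have hP0 : P ≠ ⊥ := P.ne_bot_iff.2 ⟨p, hpP, mod_cast hp.ne_zero⟩
  have factorization : t ^ m * (t ^ 2 + a) = p ^ k * -c := by
    simp only [aeval_eq, eq_intCast, Int.cast_mul, Int.cast_pow, Int.cast_natCast] at hroot
    linear_combination hroot
  have span_factorization : Ideal.span {t} ^ m * Ideal.span {t ^ 2 + (a : R)} =
      Ideal.span {(p : R)} ^ k * Ideal.span {(-c : R)} := by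
    simp only [Ideal.span_singleton_pow, Ideal.span_singleton_mul_span_singleton, factorization]
  refine prime_pow_dvd_of_pow_mul_eq_pow_mul (Ideal.prime_of_isPrime hP0 hP) hmk ?_ ?_
    (Ideal.dvd_span_singleton.2 hpP) span_factorization
  · rwa [Ideal.dvd_span_singleton, P.add_mem_iff_right (P.pow_mem_of_mem htP 2 two_pos),
      intCast_mem_iff]
  · rwa [Ideal.dvd_span_singleton, neg_mem_iff, intCast_mem_iff]

section NumberField

variable {K : Type*} [Field K] [NumberField K] {t β : 𝓞 K} {m k : ℕ} {a b c : ℤ}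

theorem exists_ringHom_zmod_two_apply_eq (ha : 8 ∣ a + 1) (hb : 8 ∣ b)
    (hirr : Irreducible (gapTwoTrinomial m a b)) (hroot : aeval t (gapTwoTrinomial m a b) = 0)
    (htop : Algebra.adjoin ℚ {(t : K)} = ⊤) (hβ : t ^ m * (t - 1) = 2 * β) (e : ZMod 2) :
    ∃ φ : 𝓞 K →+* ZMod 2, φ t = 1 ∧ φ β = e := by
  obtain ⟨n, rfl⟩ := ZMod.intCast_surjective e
  obtain ⟨z, hz, w, hw⟩ := exists_padicInt_root (m := m) ha hb (odd_two_mul_add_one n)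
  obtain ⟨g, rfl⟩ := exists_ringHom_padicInt_apply_eq (monic m a b) hirr hroot htop hz
  have hgt : g t = 1 + 2 * (n + 2 * w) := by
    push_cast at hw
    linear_combination hw
  have hgβ : g β = g t ^ m * (n + 2 * w) := by
    have := congrArg g hβ
    simp only [map_mul, map_pow, map_sub, map_one, map_ofNat] at this
    refine mul_left_cancel₀ (two_ne_zero (α := ℤ_[2])) ?_
    linear_combination -this + g t ^ m * hgt
  have htwo : (2 : ZMod 2) = 0 := rfl
  have toZMod_gt : PadicInt.toZMod (g t) = 1 := by
    simp [hgt, htwo, map_ofNat]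
  refine ⟨PadicInt.toZMod.comp g, toZMod_gt, ?_⟩
  rw [RingHom.comp_apply, hgβ, map_mul, map_pow, toZMod_gt]
  simp [htwo, map_ofNat]

theorem exists_ringHom_zmod_apply_eq_zero {p : ℕ} (hp : p.Prime) (hm : 2 < m) (hk : k ≠ 0)
    (hmk : m.Coprime k) (ha : ¬ (p : ℤ) ∣ a) (hc : ¬ (p : ℤ) ∣ c)
    (hirr : Irreducible (gapTwoTrinomial m a (p ^ k * c)))
    (hroot : aeval t (gapTwoTrinomial m a (p ^ k * c)) = 0)
    (htop : Algebra.adjoin ℚ {(t : K)} = ⊤) : ∃ φ : 𝓞 K →+* ZMod p, φ t = 0 := by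
  have dvd_norm : p ∣ Ideal.absNorm (Ideal.span {t}) := by
    rw [Ideal.absNorm_span_singleton, ← Int.natCast_dvd,
      norm_eq_neg_one_pow_mul_coeff_zero (monic ..) hirr hroot htop, coeff_zero_eq (by lia)]
    exact ((dvd_pow_self _ hk).mul_right c).mul_left _
  obtain ⟨P, hP, hPp, hPt⟩ := Ideal.exists_isMaximal_dvd_of_dvd_absNorm' hp _ dvd_norm
  have htP : t ∈ P := Ideal.dvd_span_singleton.1 hPt
  have absNorm_eq : Ideal.absNorm P = p := by
    refine absNorm_eq_of_pow_dvd_span hp hP.ne_top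
      (pow_dvd_span_of_mem hp hmk ha hc hroot hP.isPrime hPp htP) ?_
    rw [finrank_ringOfIntegers_eq_natDegree (monic ..) hirr hroot htop, natDegree_eq]
    lia
  obtain ⟨φ, hφ⟩ := exists_ringHom_zmod_ker_eq hp absNorm_eq
  exact ⟨φ, by rwa [← RingHom.mem_ker, hφ]⟩

theorem two_dvd_index_adjoin (hm : 2 < m) (hk : 3 ≤ k) (hmk : m.Coprime k) (ha : 8 ∣ a + 1)
    (hc : Odd c) (hirr : Irreducible (gapTwoTrinomial m a (2 ^ k * c)))
    (hroot : aeval t (gapTwoTrinomial m a (2 ^ k * c)) = 0)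
    (htop : Algebra.adjoin ℚ {(t : K)} = ⊤) (η : 𝓞 K) :
    2 ∣ (Algebra.adjoin ℤ {η}).toSubring.toAddSubgroup.index := by
  have hb : 8 ∣ 2 ^ k * c := (pow_dvd_pow 2 hk).mul_right c
  have four_dvd_eight : (4 : ℤ) ∣ 8 := by norm_num
  obtain ⟨β, hβ⟩ :=
    two_dvd_pow_mul_sub_one (four_dvd_eight.trans ha) (four_dvd_eight.trans hb) hroot
  obtain ⟨φ₀, hφ₀⟩ := exists_ringHom_zmod_apply_eq_zero Nat.prime_two hm (by lia) hmk
    (by lia) (by grind) hirr hroot htop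
  choose φ hφt hφβ using exists_ringHom_zmod_two_apply_eq ha hb hirr hroot htop hβ
  have hinj : Function.Injective fun o : Option (ZMod 2) ↦ o.elim φ₀ φ := by
    refine Option.injective_iff.2 ⟨fun e e' h ↦ ?_, ?_⟩
    · rw [← hφβ e, ← hφβ e']
      exact congrArg (· β) h
    · rintro ⟨e, he⟩
      exact one_ne_zero ((hφt e).symm.trans ((congrArg (· t) he).trans hφ₀))
  exact prime_dvd_index_adjoin_of_card_lt hinj (by simp) η

end NumberField

end gapTwoTrinomial

theorem not_monogenic_example_45927_24_general {m k : ℕ} {a b c q : ℤ} (hq : Prime q)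
    (hqa : q ∣ a) (hqb : q ∣ b) (hqqb : ¬ q ^ 2 ∣ b) (hm : 2 < m) (hk : 3 ≤ k)
    (hmk : m.Coprime k) (ha : 8 ∣ a + 1) (hb : b = 2 ^ k * c) (hc : Odd c) :
    Irreducible (X ^ (m + 2) + C (a : ℚ) * X ^ m + C (b : ℚ)) ∧
    ∀ (K : Type*) [Field K] [NumberField K] (θ : K),
      θ ^ (m + 2) + a * θ ^ m + b = 0 → Algebra.adjoin ℚ {θ} = ⊤ →
      (∀ η : 𝓞 K, Algebra.adjoin ℚ {(η : K)} = ⊤ →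
          2 ∣ (Algebra.adjoin ℤ {η}).toSubring.toAddSubgroup.index) ∧
        ¬ ∃ η : 𝓞 K, Algebra.adjoin ℤ {η} = ⊤ := by
  have hirr : Irreducible (gapTwoTrinomial m a b) :=
    gapTwoTrinomial.irreducible_of_eisenstein (by lia) hq hqa hqb hqqb
  have hmonic := gapTwoTrinomial.monic m a b
  refine ⟨?_, fun K _ _ θ hθ htop ↦ ?_⟩
  · have := (hmonic.irreducible_iff_irreducible_map_fraction_map (K := ℚ)).1 hirr
    rwa [gapTwoTrinomial.map_eq] at this
  have hθroot : aeval θ (gapTwoTrinomial m a b) = 0 := by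
    simpa only [gapTwoTrinomial.aeval_eq, eq_intCast] using hθ
  obtain ⟨t, rfl⟩ : ∃ t : 𝓞 K, (t : K) = θ := ⟨⟨θ, _, hmonic, hθroot⟩, rfl⟩
  have hroot : aeval t (gapTwoTrinomial m a b) = 0 := by
    rwa [aeval_algebraMap_apply, FaithfulSMul.algebraMap_eq_zero_iff] at hθroot
  subst hb
  have two_dvd := gapTwoTrinomial.two_dvd_index_adjoin hm hk hmk ha hc hirr hroot htop
  refine ⟨fun η _ ↦ two_dvd η, fun ⟨η, hη⟩ ↦ ?_⟩
  have index_eq_one : (Algebra.adjoin ℤ {η}).toSubring.toAddSubgroup.index = 1 := by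
    rw [hη]
    exact AddSubgroup.index_top
  exact absurd (two_dvd η) (by simp [index_eq_one])

/-- `x^7 + 45927 x^5 + 24` is irreducible over `ℚ`, and for the septic field `K` it
defines, `2` divides the index of every integral generator of `K`; in particular `K`
is not monogenic. -/
theorem not_monogenic_example_45927_24 :
    Irreducible (X ^ 7 + C (45927 : ℚ) * X ^ 5 + C (24 : ℚ)) ∧
    ∀ (K : Type) [Field K] [NumberField K] (θ : K),
      θ ^ 7 + 45927 * θ ^ 5 + 24 = 0 → Algebra.adjoin ℚ {θ} = ⊤ →
      (∀ η : 𝓞 K, Algebra.adjoin ℚ {(η : K)} = ⊤ →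
          2 ∣ (Algebra.adjoin ℤ {η}).toSubring.toAddSubgroup.index) ∧
        ¬ ∃ η : 𝓞 K, Algebra.adjoin ℤ {η} = ⊤ := by
  simpa using not_monogenic_example_45927_24_general (m := 5) (k := 3)
    (a := 45927) (b := 24) (c := 3) Int.prime_three (by norm_num) (by norm_num) (by norm_num)
    (by norm_num) le_rfl (by norm_num) (by norm_num) (by norm_num) (by decide)
end
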